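/- Let (X,d) be a metric space whose set X' of limit points is nonempty, and let δ = δ_{X'} be the metric defined by δ(x,y) = d(x,y) + max{d(x,X'), d(y,X')} for x ≠ y and δ(x,x) = 0. Then the pointwise product of any two δ-uniformly continuous functions X → ℝ is δ-uniformly continuous if and only if the metric subspace (X',d) is Bourbaki bounded in itself, i.e., every uniformly continuous function g : X' → ℝ is bounded. -/

import Mathlib

open Classical in
/-- The metric `δ_L(x,y) = d(x,y) + max{d(x,L), d(y,L)}` for `x ≠ y`, and
`δ_L(x,x) = 0`. -/
noncomputable def deltaL {X : Type*} [MetricSpace X] (L : Set X) (x y : X) : ℝ :=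
  if x = y then 0 else dist x y + max (Metric.infDist x L) (Metric.infDist y L)

/-- `f : X → ℝ` is uniformly continuous with respect to the metric `δ_L`. -/
def DeltaUC {X : Type*} [MetricSpace X] (L : Set X) (f : X → ℝ) : Prop :=
  ∀ ε > (0 : ℝ), ∃ η > (0 : ℝ), ∀ x y : X, deltaL L x y < η → |f x - f y| < ε

/-- The set of limit (non-isolated) points of `X`. -/
def limitPoints (X : Type*) [MetricSpace X] : Set X :=
  {x : X | x ∈ closure ({x}ᶜ : Set X)}

/-!
The argument works for `δ = deltaL L` with `L` any nonempty set of limit points. A δ-uniformly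
continuous function restricts to a uniformly continuous function on `L`, and near `L` it is within
`1` of its values on `L`. Since distinct δ-close points are close to `L`, the usual estimate for
products applies as soon as uniformly continuous functions on `L` are bounded.

Conversely, let `g` be an unbounded uniformly continuous function on `L`. It has a δ-uniformly
continuous extension `G`, given off the closure of `L` by evaluation at a nearby point of that
closure. Choose `x n ∈ L` with `2 ^ n ≤ |g (x n)|` at mutual distances bounded below and, these
being limit points, `y n ≠ x n` with `d (y n) (x n) → 0`. A series of bumps of heights `2⁻¹ ^ n` at
the `x n` that vanish at all the `y n` defines a uniformly continuous `h`, and `G * h` is at least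
`1` in absolute value at `x n` but `0` at `y n`, so it is not δ-uniformly continuous.
-/

open Filter Topology Metric

/-- A uniform space is Bourbaki bounded in itself if all its real-valued uniformly continuous
functions are bounded. -/
def BourbakiBounded (Y : Type*) [UniformSpace Y] : Prop :=
  ∀ g : Y → ℝ, UniformContinuous g → ∃ M : ℝ, ∀ y, |g y| ≤ M

/-- `f` is bounded on some uniform neighbourhood of `L`, a condition under which δ-uniform
continuity is inherited by products. The bound is taken positive so that one can divide by it. -/
def BoundedNear {X : Type*} [PseudoMetricSpace X] (L : Set X) (f : X → ℝ) : Prop :=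
  ∃ M > 0, ∃ η > 0, ∀ x, infDist x L < η → |f x| ≤ M

section Series

theorem uniformContinuous_tsum_of_summable_bound {ι X F : Type*} [UniformSpace X]
    [NormedAddCommGroup F] [CompleteSpace F] {b : ι → X → F} {a : ι → ℝ} (ha : Summable a)
    (hb : ∀ i, UniformContinuous (b i)) (hba : ∀ i p, ‖b i p‖ ≤ a i) :
    UniformContinuous fun p => ∑' i, b i p :=
  (tendstoUniformly_tsum ha hba).uniformContinuous <|
    Frequently.of_forall fun s => s.uniformContinuous_sum fun i _ => hb i

theorem exists_uniformContinuous_bump {X : Type*} [PseudoMetricSpace X] (x : X) {r a : ℝ}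
    (hr : 0 < r) (ha : 0 ≤ a) :
    ∃ b : X → ℝ, UniformContinuous b ∧ (∀ p, 0 ≤ b p) ∧ (∀ p, b p ≤ a) ∧ b x = a ∧
      ∀ p, r ≤ dist p x → b p = 0 := by
  refine ⟨fun p => a * thickenedIndicator hr {x} p, ?_, fun p => by positivity, fun p => ?_, ?_,
    fun p hp => ?_⟩
  · exact (NNReal.isometry_coe.uniformContinuous.comp
      (lipschitzWith_thickenedIndicator hr {x}).uniformContinuous).const_mul' a
  · exact mul_le_of_le_one_right ha (mod_cast thickenedIndicator_le_one hr {x} p)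
  · simp [thickenedIndicator_one hr {x} (Set.mem_singleton x)]
  · have hp' : p ∉ thickening r {x} := by
      simpa only [thickening_singleton, mem_ball, not_lt] using hp
    simp [thickenedIndicator_zero hr {x} hp']

theorem exists_uniformContinuous_le_and_eq_zero {ι X : Type*} [PseudoMetricSpace X] {x y : ι → X}
    {a : ι → ℝ} (ha : Summable a) (ha₀ : ∀ i, 0 ≤ a i) (hpos : ∀ i, 0 < dist (y i) (x i))
    (hle : ∀ i j, dist (y i) (x i) ≤ dist (y j) (x i)) :
    ∃ h : X → ℝ, UniformContinuous h ∧ (∀ i, a i ≤ h (x i)) ∧ ∀ i, h (y i) = 0 := by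
  choose b hb hb₀ hba hbx hby using fun i => exists_uniformContinuous_bump (x i) (hpos i) (ha₀ i)
  refine ⟨fun p => ∑' i, b i p, ?_, fun i => ?_, fun j => ?_⟩
  · refine uniformContinuous_tsum_of_summable_bound ha hb fun i p => ?_
    rw [Real.norm_of_nonneg (hb₀ i p)]
    exact hba i p
  · have hsum : Summable fun j => b j (x i) :=
      ha.of_nonneg_of_le (fun j => hb₀ j (x i)) fun j => hba j (x i)
    calc a i = b i (x i) := (hbx i).symm
      _ ≤ ∑' j, b j (x i) := hsum.le_tsum i fun j _ => hb₀ j (x i)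
  · simp only [hby _ _ (hle _ j), tsum_zero]

end Series

section Sequences

theorem exists_seq_two_pow_le_abs_and_pairwise_one_le_dist {α : Type*} {g : α → ℝ}
    (hg : ∀ M, ∃ x, M < |g x|) :
    ∃ x : ℕ → α, (∀ n, 2 ^ n ≤ |g (x n)|) ∧ Pairwise fun m n => 1 ≤ dist (g (x m)) (g (x n)) := by
  obtain ⟨x, hx_one, hx_double⟩ : ∃ x : ℕ → α, (∀ n, 1 ≤ |g (x n)|) ∧
      ∀ m n, m < n → 2 * |g (x m)| ≤ |g (x n)| := by
    refine exists_seq_of_forall_finset_exists (fun u => 1 ≤ |g u|) (fun u v => 2 * |g u| ≤ |g v|)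
      fun s _ => ?_
    obtain ⟨v, hv⟩ := hg (1 + ∑ u ∈ s, 2 * |g u|)
    have hsum : 0 ≤ ∑ u ∈ s, 2 * |g u| := by positivity
    refine ⟨v, by linarith, fun u hu => ?_⟩
    have hle := s.single_le_sum (f := fun u => 2 * |g u|) (fun u _ => by positivity) hu
    linarith
  have hsymm : Std.Symm fun m n => 1 ≤ dist (g (x m)) (g (x n)) :=
    ⟨fun m n hmn => by rwa [dist_comm]⟩
  refine ⟨x, fun n => ?_, Pairwise.of_lt fun m n hmn => ?_⟩
  · induction n with
    | zero => simpa using hx_one 0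
    | succ n ih => linarith [hx_double n (n + 1) n.lt_succ_self, pow_succ (2 : ℝ) n]
  · rw [dist_comm, Real.dist_eq]
    linarith [hx_one m, hx_double m n hmn, abs_sub_abs_le_abs_sub (g (x n)) (g (x m))]

theorem exists_ne_dist_lt_of_pairwise_le_dist {ι X : Type*} [MetricSpace X] {x : ι → X}
    (hx : ∀ i, x i ∈ limitPoints X) {η : ℝ} (hη : 0 < η)
    (hsep : Pairwise fun i j => η ≤ dist (x i) (x j)) {r : ι → ℝ} (hr : ∀ i, 0 < r i) :
    ∃ y : ι → X, (∀ i, y i ≠ x i) ∧ (∀ i, dist (y i) (x i) < r i) ∧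
      ∀ i j, dist (y i) (x i) ≤ dist (y j) (x i) := by
  have hnear (i : ι) : ∃ y, y ≠ x i ∧ dist (x i) y < min (η / 2) (r i) :=
    Metric.mem_closure_iff.1 (hx i) _ (lt_min (half_pos hη) (hr i))
  choose y hne hlt using hnear
  simp only [lt_min_iff, dist_comm (x _)] at hlt
  refine ⟨y, hne, fun i => (hlt i).2, fun i j => ?_⟩
  obtain rfl | hij := eq_or_ne i j
  · rfl
  · linarith [hsep hij, (hlt i).1, (hlt j).1, dist_triangle_left (x i) (x j) (y j)]

end Sequences

section Subsets

theorem exists_dist_le_two_mul_infDist {X : Type*} [PseudoMetricSpace X] {L : Set X}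
    (hL : L.Nonempty) (hL_closed : IsClosed L) (x : X) :
    ∃ z : L, dist x z ≤ 2 * infDist x L := by
  by_cases hx : x ∈ L
  · exact ⟨⟨x, hx⟩, by simp [infDist_nonneg]⟩
  · have hpos : 0 < infDist x L := (hL_closed.notMem_iff_infDist_pos hL).1 hx
    obtain ⟨z, hz, hlt⟩ := (infDist_lt_iff hL).1 (lt_two_mul_self hpos)
    exact ⟨⟨z, hz⟩, hlt.le⟩

theorem exists_uniformContinuous_extension_closure {Y F : Type*} [UniformSpace Y] [UniformSpace F]
    [T0Space F] [CompleteSpace F] {s : Set Y} {g : s → F} (hg : UniformContinuous g) :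
    ∃ G : closure s → F, UniformContinuous G ∧ ∀ z, G (Set.inclusion subset_closure z) = g z := by
  have hind : IsUniformInducing (Set.inclusion (subset_closure (s := s))) :=
    (isUniformInducing_val (closure s)).of_comp_iff.1 (isUniformInducing_val s)
  have hdense : DenseRange (Set.inclusion (subset_closure (s := s))) :=
    (denseRange_inclusion_iff subset_closure).2 subset_rfl
  exact ⟨_, uniformContinuous_uniformly_extend hind hdense hg,
    uniformly_extend_of_ind hind hdense hg⟩

end Subsets

section Delta

variable {X : Type*} [MetricSpace X] {L : Set X} {f g : X → ℝ}

theorem dist_le_deltaL (L : Set X) (x y : X) : dist x y ≤ deltaL L x y := by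
  unfold deltaL
  split_ifs with hxy
  · simp [hxy]
  · exact le_add_of_nonneg_right (le_max_of_le_left infDist_nonneg)

theorem infDist_left_le_deltaL (L : Set X) {x y : X} (hxy : x ≠ y) :
    infDist x L ≤ deltaL L x y := by
  rw [deltaL, if_neg hxy]
  exact le_add_of_nonneg_of_le dist_nonneg (le_max_left _ _)

theorem infDist_right_le_deltaL (L : Set X) {x y : X} (hxy : x ≠ y) :
    infDist y L ≤ deltaL L x y := by
  rw [deltaL, if_neg hxy]
  exact le_add_of_nonneg_of_le dist_nonneg (le_max_right _ _)

theorem deltaL_le_two_mul_dist_of_mem {x z : X} (hz : z ∈ L) : deltaL L x z ≤ 2 * dist x z := by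
  unfold deltaL
  split_ifs with hxz
  · simp [hxz]
  · rw [two_mul, infDist_zero_of_mem hz]
    gcongr
    exact max_le (infDist_le_dist_of_mem hz) dist_nonneg

theorem deltaL_closure (L : Set X) : deltaL (closure L) = deltaL L := by
  ext x y
  simp only [deltaL, infDist_closure]

theorem deltaUC_closure_iff : DeltaUC (closure L) f ↔ DeltaUC L f := by
  rw [DeltaUC, DeltaUC, deltaL_closure]

namespace DeltaUC

theorem of_uniformContinuous (L : Set X) (hf : UniformContinuous f) : DeltaUC L f := by
  intro ε hε
  obtain ⟨η, hη, hfη⟩ := Metric.uniformContinuous_iff.1 hf ε hε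
  exact ⟨η, hη, fun x y hxy => hfη ((dist_le_deltaL L x y).trans_lt hxy)⟩

theorem comp_of_dist_le_two_mul_infDist {g : L → ℝ} (hg : UniformContinuous g) {r : X → L}
    (hr : ∀ x, dist x (r x : X) ≤ 2 * infDist x L) : DeltaUC L (g ∘ r) := by
  intro ε hε
  obtain ⟨η, hη, hgη⟩ := Metric.uniformContinuous_iff.1 hg ε hε
  refine ⟨η / 5, by positivity, fun x y hxy => ?_⟩
  obtain rfl | hne := eq_or_ne x y
  · simpa using hε
  refine hgη ?_
  calc dist (r x : X) (r y)
      ≤ dist x (r x) + dist x y + dist y (r y) := by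
        simpa only [dist_comm x] using dist_triangle4 (r x : X) x y (r y)
    _ ≤ 2 * deltaL L x y + deltaL L x y + 2 * deltaL L x y := by
        gcongr
        · exact (hr x).trans (by gcongr; exact infDist_left_le_deltaL L hne)
        · exact dist_le_deltaL L x y
        · exact (hr y).trans (by gcongr; exact infDist_right_le_deltaL L hne)
    _ < η := by linarith

theorem exists_extension_of_isClosed (hL : L.Nonempty) (hL_closed : IsClosed L) {g : L → ℝ}
    (hg : UniformContinuous g) : ∃ G : X → ℝ, DeltaUC L G ∧ ∀ z : L, G z = g z := by
  choose r hr using exists_dist_le_two_mul_infDist hL hL_closed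
  have hr_fix (z : L) : r z = z := by
    have hle := hr z
    rw [infDist_zero_of_mem z.2, mul_zero] at hle
    exact (Subtype.ext (dist_le_zero.1 hle)).symm
  exact ⟨g ∘ r, comp_of_dist_le_two_mul_infDist hg hr, fun z => congrArg g (hr_fix z)⟩

theorem exists_extension (hL : L.Nonempty) {g : L → ℝ} (hg : UniformContinuous g) :
    ∃ G : X → ℝ, DeltaUC L G ∧ ∀ z : L, G z = g z := by
  obtain ⟨g', hg', hg'_eq⟩ := exists_uniformContinuous_extension_closure hg
  obtain ⟨G, hG, hG_eq⟩ := exists_extension_of_isClosed hL.closure isClosed_closure hg'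
  exact ⟨G, deltaUC_closure_iff.1 hG, fun z => (hG_eq _).trans (hg'_eq z)⟩

theorem exists_abs_sub_lt_of_mem (hf : DeltaUC L f) {ε : ℝ} (hε : 0 < ε) :
    ∃ η > 0, ∀ x, ∀ z ∈ L, dist x z < η → |f x - f z| < ε := by
  obtain ⟨η, hη, hfη⟩ := hf ε hε
  refine ⟨η / 2, half_pos hη, fun x z hz hxz => hfη x z ?_⟩
  linarith [deltaL_le_two_mul_dist_of_mem (x := x) hz]

theorem uniformContinuous_domRestrict (hf : DeltaUC L f) : UniformContinuous (L.domRestrict f) := by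
  refine Metric.uniformContinuous_iff.2 fun ε hε => ?_
  obtain ⟨η, hη, hfη⟩ := hf.exists_abs_sub_lt_of_mem hε
  exact ⟨η, hη, fun {x z} hxz => hfη x z z.2 hxz⟩

theorem tendsto_sub_of_mem {ι : Type*} {l : Filter ι} {x y : ι → X} (hf : DeltaUC L f)
    (hx : ∀ i, x i ∈ L) (hyx : Tendsto (fun i => dist (y i) (x i)) l (𝓝 0)) :
    Tendsto (fun i => f (y i) - f (x i)) l (𝓝 0) := by
  refine Metric.tendsto_nhds.2 fun ε hε => ?_
  obtain ⟨η, hη, hfη⟩ := hf.exists_abs_sub_lt_of_mem hε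
  filter_upwards [hyx.eventually_lt_const hη] with i hi
  simpa only [dist_zero_right, Real.norm_eq_abs] using hfη (y i) (x i) (hx i) hi

theorem boundedNear (hf : DeltaUC L f) (hL : L.Nonempty) (hL_bdd : BourbakiBounded L) :
    BoundedNear L f := by
  obtain ⟨M, hM⟩ := hL_bdd _ hf.uniformContinuous_domRestrict
  have hM₀ : 0 ≤ M := (abs_nonneg _).trans (hM ⟨_, hL.some_mem⟩)
  obtain ⟨η, hη, hfη⟩ := hf.exists_abs_sub_lt_of_mem one_pos
  refine ⟨M + 1, by positivity, η, hη, fun x hx => ?_⟩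
  obtain ⟨z, hz, hxz⟩ := (infDist_lt_iff hL).1 hx
  have hfz : |f z| ≤ M := hM ⟨z, hz⟩
  linarith [hfη x z hz hxz, abs_sub_abs_le_abs_sub (f x) (f z)]

theorem mul_of_boundedNear (hf : DeltaUC L f) (hg : DeltaUC L g) (hf_bdd : BoundedNear L f)
    (hg_bdd : BoundedNear L g) : DeltaUC L fun x => f x * g x := by
  intro ε hε
  obtain ⟨M, hM, a, ha, hfM⟩ := hf_bdd
  obtain ⟨N, hN, b, hb, hgN⟩ := hg_bdd
  obtain ⟨c, hc, hfc⟩ := hf (ε / (2 * N)) (by positivity)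
  obtain ⟨e, he, hge⟩ := hg (ε / (2 * M)) (by positivity)
  refine ⟨min (min a b) (min c e), by positivity, fun x y hxy => ?_⟩
  obtain rfl | hne := eq_or_ne x y
  · simpa using hε
  simp only [lt_min_iff] at hxy
  obtain ⟨⟨hxa, hxb⟩, hxc, hxe⟩ := hxy
  have hfx : |f x| ≤ M := hfM x ((infDist_left_le_deltaL L hne).trans_lt hxa)
  have hgy : |g y| ≤ N := hgN y ((infDist_right_le_deltaL L hne).trans_lt hxb)
  have hfxy : |f x - f y| < ε / (2 * N) := hfc x y hxc
  have hgxy : |g x - g y| < ε / (2 * M) := hge x y hxe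
  calc |f x * g x - f y * g y|
      = |f x * (g x - g y) + (f x - f y) * g y| := by ring_nf
    _ ≤ |f x| * |g x - g y| + |f x - f y| * |g y| := by
        simpa only [abs_mul] using abs_add_le (f x * (g x - g y)) ((f x - f y) * g y)
    _ ≤ M * |g x - g y| + |f x - f y| * N := by gcongr
    _ < M * (ε / (2 * M)) + ε / (2 * N) * N := by gcongr
    _ = ε := by field_simp; ring

end DeltaUC

theorem exists_deltaUC_mul_not_deltaUC (hL : L ⊆ limitPoints X) (hf : DeltaUC L f)
    (hf_unbdd : ∀ M, ∃ z : L, M < |f z|) :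
    ∃ h : X → ℝ, DeltaUC L h ∧ ¬ DeltaUC L fun x => f x * h x := by
  obtain ⟨x, hx_pow, hx_sep⟩ :=
    exists_seq_two_pow_le_abs_and_pairwise_one_le_dist (g := L.domRestrict f) hf_unbdd
  obtain ⟨η, hη, hfη⟩ := Metric.uniformContinuous_iff.1 hf.uniformContinuous_domRestrict 1 one_pos
  have hsep : Pairwise fun m n => η ≤ dist (x m : X) (x n) := fun m n hmn =>
    not_lt.1 fun hlt => (hfη hlt).not_ge (hx_sep hmn)
  obtain ⟨y, hy_ne, hy_lt, hy_le⟩ := exists_ne_dist_lt_of_pairwise_le_dist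
    (fun n => hL (x n).2) hη hsep fun n : ℕ => Nat.one_div_pos_of_nat (α := ℝ) (n := n)
  obtain ⟨h, hh, hhx, hhy⟩ := exists_uniformContinuous_le_and_eq_zero
    (summable_geometric_of_lt_one (r := (2⁻¹ : ℝ)) (by norm_num) (by norm_num))
    (fun n => by positivity) (fun n => dist_pos.2 (hy_ne n)) hy_le
  refine ⟨h, .of_uniformContinuous L hh, fun hfh => ?_⟩
  have hyx : Tendsto (fun n => dist (y n) (x n)) atTop (𝓝 0) :=
    squeeze_zero (fun _ => dist_nonneg) (fun n => (hy_lt n).le)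
      tendsto_one_div_add_atTop_nhds_zero_nat
  have hlim : Tendsto (fun n => |f (x n) * h (x n)|) atTop (𝓝 0) := by
    simpa [hhy] using (hfh.tendsto_sub_of_mem (fun n => (x n).2) hyx).abs
  have hge (n : ℕ) : 1 ≤ |f (x n) * h (x n)| :=
    calc (1 : ℝ) = 2 ^ n * 2⁻¹ ^ n := by rw [← mul_pow]; norm_num
      _ ≤ |f (x n)| * |h (x n)| := by
        gcongr
        · exact hx_pow n
        · exact (hhx n).trans (le_abs_self _)
      _ = |f (x n) * h (x n)| := (abs_mul _ _).symm
  exact one_pos.not_ge (ge_of_tendsto' hlim hge)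

theorem bourbakiBounded_of_forall_deltaUC_mul (hL_lim : L ⊆ limitPoints X)
    (hmul : ∀ f g : X → ℝ, DeltaUC L f → DeltaUC L g → DeltaUC L fun x => f x * g x) :
    BourbakiBounded L := by
  intro g hg
  by_contra! hunbdd
  obtain ⟨z, -⟩ := hunbdd 0
  obtain ⟨G, hG, hGg⟩ := DeltaUC.exists_extension (Set.nonempty_of_mem z.2) hg
  obtain ⟨h, hh, hGh⟩ := exists_deltaUC_mul_not_deltaUC hL_lim hG (by simpa only [hGg] using hunbdd)
  exact hGh (hmul G h hG hh)

theorem stmt19_general (hL : L.Nonempty) (hL_lim : L ⊆ limitPoints X) :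
    (∀ f g : X → ℝ, DeltaUC L f → DeltaUC L g → DeltaUC L fun x => f x * g x) ↔
      BourbakiBounded L :=
  ⟨bourbakiBounded_of_forall_deltaUC_mul hL_lim, fun hL_bdd _ _ hf hg =>
    hf.mul_of_boundedNear hg (hf.boundedNear hL hL_bdd) (hg.boundedNear hL hL_bdd)⟩

end Delta

theorem stmt19 {X : Type*} [MetricSpace X] (hX' : (limitPoints X).Nonempty) :
    (∀ f g : X → ℝ, DeltaUC (limitPoints X) f → DeltaUC (limitPoints X) g →
        DeltaUC (limitPoints X) (fun x => f x * g x)) ↔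
      (∀ g : (limitPoints X) → ℝ, UniformContinuous g → ∃ M : ℝ, ∀ x, |g x| ≤ M) :=
  stmt19_general hX' subset_rfl
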